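/- arXiv:2603.08686 — 2 statements merged into one kernel-verified Lean document; each statement's English description precedes it below -/
import Mathlib

section
/- In the KP tau-function setting, for all integers k, l and at every point of ℝ⁷, the tau function τ⁽⁰⁾ satisfies the bilinear Toda-type identity 2(∂_{x₋₁⁽¹⁾}∂_{x₁}τ_{k,l}⁽⁰⁾·τ_{k,l}⁽⁰⁾ − ∂_{x₋₁⁽¹⁾}τ_{k,l}⁽⁰⁾·∂_{x₁}τ_{k,l}⁽⁰⁾) − 2(τ_{k,l}⁽⁰⁾)² = −2τ_{k+1,l}⁽⁰⁾·τ_{k−1,l}⁽⁰⁾, i.e., the equation (D_{x₋₁⁽¹⁾}D_{x₁} − 2)τ_{k,l}⁽⁰⁾·τ_{k,l}⁽⁰⁾ = −2τ_{k+1,l}⁽⁰⁾τ_{k−1,l}⁽⁰⁾ holds. -/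
open Complex Matrix

noncomputable section

/-- Partial derivative of a function on `ℝ⁷` in the `i`-th coordinate direction.
Coordinates: `0 ↦ x₁`, `1 ↦ x₂`, `2 ↦ x₃`, `3 ↦ x₋₁⁽¹⁾`, `4 ↦ x₋₁⁽²⁾`,
`5 ↦ y₁⁽¹⁾`, `6 ↦ y₁⁽²⁾`. -/
def pd (i : Fin 7) (f : (Fin 7 → ℝ) → ℂ) : (Fin 7 → ℝ) → ℂ :=
  fun X => deriv (fun s => f (Function.update X i s)) (X i)

/-- Border a square matrix with one extra column, one extra row, and corner entry `0`. -/
def bord {n : ℕ} (M : Matrix (Fin n) (Fin n) ℂ) (col row : Fin n → ℂ) :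
    Matrix (Fin (n + 1)) (Fin (n + 1)) ℂ :=
  Matrix.of fun i j =>
    if hi : (i : ℕ) < n then
      if hj : (j : ℕ) < n then M ⟨i, hi⟩ ⟨j, hj⟩ else col ⟨i, hi⟩
    else if hj : (j : ℕ) < n then row ⟨j, hj⟩ else 0

/-- Border a square matrix with two extra columns `c1, c2`, two extra rows `r1, r2`,
and a `2×2` zero corner block. -/
def bord2 {n : ℕ} (M : Matrix (Fin n) (Fin n) ℂ) (c1 c2 r1 r2 : Fin n → ℂ) :
    Matrix (Fin (n + 2)) (Fin (n + 2)) ℂ :=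
  Matrix.of fun i j =>
    if hi : (i : ℕ) < n then
      if hj : (j : ℕ) < n then M ⟨i, hi⟩ ⟨j, hj⟩
      else if (j : ℕ) = n then c1 ⟨i, hi⟩ else c2 ⟨i, hi⟩
    else if hj : (j : ℕ) < n then
      (if (i : ℕ) = n then r1 ⟨j, hj⟩ else r2 ⟨j, hj⟩)
    else 0

/-- The data of the KP tau-function setting. -/
structure KPData (N : ℕ) where
  a : ℂ
  b : ℂ
  p : Fin N → ℂ
  pb : Fin N → ℂ
  q : Fin N → ℂ
  qb : Fin N → ℂ
  r : Fin N → ℂ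
  rb : Fin N → ℂ
  xi0 : Fin N → ℂ
  xib0 : Fin N → ℂ
  Ct : Fin N → ℂ
  Cb : Fin N → ℂ
  Dt : Fin N → ℂ
  Db : Fin N → ℂ

namespace KPData

variable {N : ℕ} (K : KPData N)

/-- The nondegeneracy assumptions of the KP tau-function setting. -/
def Nondeg : Prop :=
  K.a ≠ 0 ∧ K.b ≠ 0 ∧
  (∀ i, K.p i ≠ K.a ∧ K.p i ≠ K.b) ∧
  (∀ i, K.pb i ≠ -K.a ∧ K.pb i ≠ -K.b) ∧
  (∀ i j, K.p i + K.pb j ≠ 0) ∧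
  (∀ i j, K.q i + K.qb j ≠ 0) ∧
  (∀ i j, K.r i + K.rb j ≠ 0)

/-- The phase `ξ_i`. -/
def xi (i : Fin N) (X : Fin 7 → ℝ) : ℂ :=
  K.p i * (X 0 : ℂ) + (K.p i) ^ 2 * (X 1 : ℂ) + (K.p i) ^ 3 * (X 2 : ℂ)
    + (X 3 : ℂ) / (K.p i - K.a) + (X 4 : ℂ) / (K.p i - K.b) + K.xi0 i

/-- The phase `ξ̄_j`. -/
def xib (j : Fin N) (X : Fin 7 → ℝ) : ℂ :=
  K.pb j * (X 0 : ℂ) - (K.pb j) ^ 2 * (X 1 : ℂ) + (K.pb j) ^ 3 * (X 2 : ℂ)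
    + (X 3 : ℂ) / (K.pb j + K.a) + (X 4 : ℂ) / (K.pb j + K.b) + K.xib0 j

/-- The phase `η_i = q_i y₁⁽¹⁾`. -/
def eta (i : Fin N) (X : Fin 7 → ℝ) : ℂ := K.q i * (X 5 : ℂ)

/-- The phase `η̄_j = q̄_j y₁⁽¹⁾`. -/
def etab (j : Fin N) (X : Fin 7 → ℝ) : ℂ := K.qb j * (X 5 : ℂ)

/-- The phase `χ_i = r_i y₁⁽²⁾`. -/
def chi (i : Fin N) (X : Fin 7 → ℝ) : ℂ := K.r i * (X 6 : ℂ)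

/-- The phase `χ̄_j = r̄_j y₁⁽²⁾`. -/
def chib (j : Fin N) (X : Fin 7 → ℝ) : ℂ := K.rb j * (X 6 : ℂ)

/-- The matrix entry `m_{ij}^{k,l}` (with integer exponents `k, l`). -/
def ment (k l : ℤ) (i j : Fin N) (X : Fin 7 → ℝ) : ℂ :=
  (1 / (K.p i + K.pb j)) * (-((K.p i - K.a) / (K.pb j + K.a))) ^ k
      * (-((K.p i - K.b) / (K.pb j + K.b))) ^ l
      * Complex.exp (K.xi i X + K.xib j X)
    + K.Ct i * K.Cb j * Complex.exp (K.eta i X + K.etab j X) / (K.q i + K.qb j)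
    + K.Dt i * K.Db j * Complex.exp (K.chi i X + K.chib j X) / (K.r i + K.rb j)

/-- The vector entry `Φ_{k,l,i}`. -/
def phi (k l : ℤ) (i : Fin N) (X : Fin 7 → ℝ) : ℂ :=
  (1 - K.p i / K.a) ^ k * (1 - K.p i / K.b) ^ l * Complex.exp (K.xi i X)

/-- The vector entry `Φ̄_{k,l,i}`. -/
def phib (k l : ℤ) (i : Fin N) (X : Fin 7 → ℝ) : ℂ :=
  (1 + K.pb i / K.a) ^ (-k) * (1 + K.pb i / K.b) ^ (-l) * Complex.exp (K.xib i X)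

/-- The vector entry `Ψ_i`. -/
def psi (i : Fin N) (X : Fin 7 → ℝ) : ℂ := K.Ct i * Complex.exp (K.eta i X)

/-- The vector entry `Ψ̄_i`. -/
def psib (i : Fin N) (X : Fin 7 → ℝ) : ℂ := K.Cb i * Complex.exp (K.etab i X)

/-- The vector entry `Υ_i`. -/
def ups (i : Fin N) (X : Fin 7 → ℝ) : ℂ := K.Dt i * Complex.exp (K.chi i X)

/-- The vector entry `Ῡ_i`. -/
def upsb (i : Fin N) (X : Fin 7 → ℝ) : ℂ := K.Db i * Complex.exp (K.chib i X)

/-- `τ_{k,l}⁽⁰⁾ = det M_{k,l}`. -/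
def tau0 (k l : ℤ) (X : Fin 7 → ℝ) : ℂ :=
  (Matrix.of fun i j => K.ment k l i j X).det

/-- `τ_{k,l}⁽¹⁾`: bordered with column `Φ_{k,l}` and row `-Ψ̄ᵀ`. -/
def tau1 (k l : ℤ) (X : Fin 7 → ℝ) : ℂ :=
  (bord (Matrix.of fun i j => K.ment k l i j X)
    (fun i => K.phi k l i X) (fun j => -K.psib j X)).det

/-- `τ̄_{k,l}⁽¹⁾`: bordered with column `Ψ` and row `-Φ̄_{k,l}ᵀ`. -/
def tau1b (k l : ℤ) (X : Fin 7 → ℝ) : ℂ :=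
  (bord (Matrix.of fun i j => K.ment k l i j X)
    (fun i => K.psi i X) (fun j => -K.phib k l j X)).det

/-- `τ_{k,l}⁽²⁾`: bordered with column `Φ_{k,l}` and row `-Ῡᵀ`. -/
def tau2 (k l : ℤ) (X : Fin 7 → ℝ) : ℂ :=
  (bord (Matrix.of fun i j => K.ment k l i j X)
    (fun i => K.phi k l i X) (fun j => -K.upsb j X)).det

/-- `τ̄_{k,l}⁽²⁾`: bordered with column `Υ` and row `-Φ̄_{k,l}ᵀ`. -/
def tau2b (k l : ℤ) (X : Fin 7 → ℝ) : ℂ :=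
  (bord (Matrix.of fun i j => K.ment k l i j X)
    (fun i => K.ups i X) (fun j => -K.phib k l j X)).det

/-- `τ_{k,l}⁽¹'²⁾`: double-bordered with columns `Φ_{k,l}`, `∂_{x₁}Φ_{k,l}` and rows
`-Ῡᵀ`, `-Ψ̄ᵀ`. -/
def tau12 (k l : ℤ) (X : Fin 7 → ℝ) : ℂ :=
  (bord2 (Matrix.of fun i j => K.ment k l i j X)
    (fun i => K.phi k l i X)
    (fun i => pd 0 (fun Y => K.phi k l i Y) X)
    (fun j => -K.upsb j X)
    (fun j => -K.psib j X)).det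

end KPData

namespace TodaAux

/-- An identity between continuous functions of a matrix that holds for invertible matrices
holds for all matrices. -/
theorem eq_of_isUnit {N : ℕ} (F G : Matrix (Fin N) (Fin N) ℂ → ℂ) (hF : Continuous F)
    (hG : Continuous G) (h : ∀ M, IsUnit M.det → F M = G M) (M : Matrix (Fin N) (Fin N) ℂ) :
    F M = G M := by
  have hfin : Set.Finite {r : ℂ | (-M).charpoly.IsRoot r} :=
    Polynomial.finite_setOfPred_isRoot (Matrix.charpoly_monic _).ne_zero
  have hd : Dense ({r : ℂ | (-M).charpoly.IsRoot r}ᶜ) := Set.Countable.dense_compl ℂ hfin.countable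
  have hc : Continuous (fun r : ℂ => M + r • (1 : Matrix (Fin N) (Fin N) ℂ)) := by fun_prop
  have := Continuous.ext_on hd (hF.comp hc) (hG.comp hc) (by
    intro r hr
    apply h
    rw [isUnit_iff_ne_zero]
    intro h0
    apply hr
    simp only [Set.mem_ofPred_eq, Polynomial.IsRoot, Matrix.eval_charpoly]
    rw [← h0]
    congr 1
    simp only [sub_neg_eq_add, add_comm, Matrix.smul_one_eq_diagonal, Matrix.scalar_apply])
  simpa using congrFun this 0

/-- `A_M(x, y) = yᵀ adj(M) x`. -/
def bil {N : ℕ} (M : Matrix (Fin N) (Fin N) ℂ) (x y : Fin N → ℂ) : ℂ :=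
  y ⬝ᵥ (M.adjugate *ᵥ x)

theorem bil_add_left {N : ℕ} (M : Matrix (Fin N) (Fin N) ℂ) (x x' y : Fin N → ℂ) :
    bil M (x + x') y = bil M x y + bil M x' y := by
  simp [bil, Matrix.mulVec_add]

theorem bil_add_right {N : ℕ} (M : Matrix (Fin N) (Fin N) ℂ) (x y y' : Fin N → ℂ) :
    bil M x (y + y') = bil M x y + bil M x y' := by
  simp [bil]

theorem bil_neg_left {N : ℕ} (M : Matrix (Fin N) (Fin N) ℂ) (x y : Fin N → ℂ) :
    bil M (-x) y = - bil M x y := by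
  simp [bil, Matrix.mulVec_neg]

theorem adj_of_isUnit {N : ℕ} (M : Matrix (Fin N) (Fin N) ℂ) (hM : IsUnit M.det)
    (x y : Fin N → ℂ) : bil M x y = M.det * (y ⬝ᵥ (M⁻¹ *ᵥ x)) := by
  have : M.adjugate = M.det • M⁻¹ := by
    rw [Matrix.inv_def, smul_smul, Ring.mul_inverse_cancel _ hM, one_smul]
  rw [bil, this, Matrix.smul_mulVec, dotProduct_smul, smul_eq_mul]

theorem continuous_bil {N : ℕ} (x y : Fin N → ℂ) :
    Continuous (fun M : Matrix (Fin N) (Fin N) ℂ => bil M x y) := by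
  unfold bil
  exact Continuous.dotProduct continuous_const
    (Continuous.matrix_mulVec (Continuous.matrix_adjugate continuous_id) continuous_const)

theorem det_rank_two_aux {N : ℕ} (M : Matrix (Fin N) (Fin N) ℂ) (hM : IsUnit M.det)
    (u v u' v' : Fin N → ℂ) :
    (M + vecMulVec u v + vecMulVec u' v').det = M.det *
      ((1 + v ⬝ᵥ (M⁻¹ *ᵥ u)) * (1 + v' ⬝ᵥ (M⁻¹ *ᵥ u'))
        - (v ⬝ᵥ (M⁻¹ *ᵥ u')) * (v' ⬝ᵥ (M⁻¹ *ᵥ u))) := by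
  set U : Matrix (Fin N) (Fin 2) ℂ := Matrix.of fun i => ![u i, u' i] with hU
  set V : Matrix (Fin 2) (Fin N) ℂ := Matrix.of ![v, v'] with hV
  have h1 : M + vecMulVec u v + vecMulVec u' v' = M + U * V := by
    ext i j
    simp [hU, hV, Matrix.mul_apply, vecMulVec_apply, Fin.sum_univ_two, add_assoc]
  have h2 : ∀ a b, (V * M⁻¹ * U) a b = V a ⬝ᵥ (M⁻¹ *ᵥ (fun i => U i b)) := by
    intro a b
    rw [Matrix.mul_assoc]
    rfl
  rw [h1, Matrix.det_add_mul U V hM, Matrix.det_fin_two]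
  have v0 : V 0 = v := rfl
  have v1 : V 1 = v' := rfl
  have u0 : (fun i => U i 0) = u := rfl
  have u1 : (fun i => U i 1) = u' := rfl
  simp only [Matrix.add_apply, h2, v0, v1, u0, u1]
  simp

theorem det_rank_two {N : ℕ} (M : Matrix (Fin N) (Fin N) ℂ) (u v u' v' : Fin N → ℂ) :
    M.det * (M + vecMulVec u v + vecMulVec u' v').det =
      (M.det + bil M u v) * (M.det + bil M u' v') - bil M u' v * bil M u v' := by
  have c1 := fun x y : Fin N → ℂ => continuous_bil x y
  refine eq_of_isUnit
    (fun M => M.det * (M + vecMulVec u v + vecMulVec u' v').det)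
    (fun M => (M.det + bil M u v) * (M.det + bil M u' v') - bil M u' v * bil M u v')
    ?_ ?_ ?_ M
  · exact (Continuous.matrix_det continuous_id).mul (Continuous.matrix_det (by fun_prop))
  · have hd : Continuous (fun M : Matrix (Fin N) (Fin N) ℂ => M.det) :=
      Continuous.matrix_det continuous_id
    exact ((hd.add (c1 u v)).mul (hd.add (c1 u' v'))).sub ((c1 u' v).mul (c1 u v'))
  · intro M hM
    simp only [det_rank_two_aux M hM, adj_of_isUnit M hM]
    ring

theorem det_rank_one {N : ℕ} (M : Matrix (Fin N) (Fin N) ℂ) (u v : Fin N → ℂ) :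
    (M + vecMulVec u v).det = M.det + bil M u v := by
  refine eq_of_isUnit (fun M => (M + vecMulVec u v).det) (fun M => M.det + bil M u v)
    ?_ ?_ ?_ M
  · exact Continuous.matrix_det (by fun_prop)
  · exact (Continuous.matrix_det continuous_id).add (continuous_bil u v)
  · intro M hM
    have := det_rank_two_aux M hM u v 0 0
    simp only [adj_of_isUnit M hM]
    simp at this
    rw [this]
    ring

theorem trace_adj {N : ℕ} (M : Matrix (Fin N) (Fin N) ℂ) (u v : Fin N → ℂ) :
    (M.adjugate * vecMulVec u v).trace = bil M u v := by
  simp only [bil, Matrix.mul_vecMulVec, Matrix.trace_vecMulVec]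
  rw [dotProduct_comm]

/-- Jacobi's formula. -/
theorem hasDerivAt_det {N : ℕ} (M : ℝ → Matrix (Fin N) (Fin N) ℂ)
    (M' : Matrix (Fin N) (Fin N) ℂ) (t : ℝ)
    (h : ∀ i j, HasDerivAt (fun s => M s i j) (M' i j) t) :
    HasDerivAt (fun s => (M s).det) (((M t).adjugate * M').trace) t := by
  have h1 : HasDerivAt (fun s => (M s).det)
      (∑ σ : Equiv.Perm (Fin N), ((Equiv.Perm.sign σ : ℤ) : ℂ) *
        ∑ i, (∏ j ∈ Finset.univ.erase i, M t (σ j) j) • M' (σ i) i) t := by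
    simp only [Matrix.det_apply']
    refine HasDerivAt.fun_sum fun σ _ => HasDerivAt.const_mul _ ?_
    exact HasDerivAt.fun_finsetProd fun i _ => h (σ i) i
  convert h1 using 1
  have h2 : ∀ i, ((M t).adjugate * M') i i = ((M t).updateCol i (fun a => M' a i)).det := by
    intro i
    rw [← Matrix.cramer_apply, Matrix.cramer_eq_adjugate_mulVec]
    rfl
  simp only [Matrix.trace, Matrix.diag_apply, h2, Matrix.det_apply', Finset.mul_sum]
  rw [Finset.sum_comm]
  refine Finset.sum_congr rfl fun σ _ => Finset.sum_congr rfl fun i _ => ?_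
  congr 1
  rw [← Finset.prod_erase_mul _ _ (Finset.mem_univ i), smul_eq_mul]
  congr 1
  · refine Finset.prod_congr rfl fun j hj => ?_
    rw [Matrix.updateCol_ne (Finset.ne_of_mem_erase hj)]
  · rw [Matrix.updateCol_self]

theorem bil_shift {N : ℕ} (M : Matrix (Fin N) (Fin N) ℂ) (u v x : Fin N → ℂ) :
    bil (M + vecMulVec u v) x v = bil M x v := by
  have h := det_rank_one (M + vecMulVec u v) x v
  rw [add_assoc, ← Matrix.add_vecMulVec, det_rank_one, det_rank_one, bil_add_left] at h
  linear_combination -h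

theorem bil_shift' {N : ℕ} (M : Matrix (Fin N) (Fin N) ℂ) (u v y : Fin N → ℂ) :
    bil (M + vecMulVec u v) u y = bil M u y := by
  have h := det_rank_one (M + vecMulVec u v) u y
  rw [add_assoc, ← Matrix.vecMulVec_add, det_rank_one, det_rank_one, bil_add_right] at h
  linear_combination -h

variable {N : ℕ} (K : KPData N)

def uu (k l : ℤ) (X : Fin 7 → ℝ) (i : Fin N) : ℂ :=
  (K.p i - K.a) ^ k * (K.p i - K.b) ^ l * Complex.exp (K.xi i X)

def vv (k l : ℤ) (X : Fin 7 → ℝ) (j : Fin N) : ℂ :=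
  (-(K.pb j + K.a)⁻¹) ^ k * (-(K.pb j + K.b)⁻¹) ^ l * Complex.exp (K.xib j X)

def uu' (k l : ℤ) (X : Fin 7 → ℝ) (i : Fin N) : ℂ := uu K k l X i / (K.p i - K.a)

def vv' (k l : ℤ) (X : Fin 7 → ℝ) (j : Fin N) : ℂ := vv K k l X j / (K.pb j + K.a)

def MM (k l : ℤ) (X : Fin 7 → ℝ) : Matrix (Fin N) (Fin N) ℂ :=
  Matrix.of fun i j => K.ment k l i j X

theorem ment_eq (k l : ℤ) (i j : Fin N) (X : Fin 7 → ℝ) :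
    K.ment k l i j X = uu K k l X i * vv K k l X j / (K.p i + K.pb j)
    + K.Ct i * K.Cb j * Complex.exp (K.eta i X + K.etab j X) / (K.q i + K.qb j)
    + K.Dt i * K.Db j * Complex.exp (K.chi i X + K.chib j X) / (K.r i + K.rb j) := by
  have h : ∀ x y : ℂ, -(x / y) = x * (-y⁻¹) := fun x y => by ring
  simp only [KPData.ment, uu, vv, h, mul_zpow, Complex.exp_add]
  ring

theorem hu0 (k l : ℤ) (X : Fin 7 → ℝ) (i : Fin N) :
    HasDerivAt (fun s => uu K k l (Function.update X 0 s) i) (K.p i * uu K k l X i) (X 0) := by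
  have h : HasDerivAt (fun s : ℝ => K.xi i (Function.update X 0 s)) (K.p i) (X 0) := by
    simp only [KPData.xi, Function.update_self, ne_eq, Fin.reduceEq, not_false_eq_true,
      Function.update_of_ne]
    have := (Complex.ofRealCLM.hasDerivAt (x := X 0)).const_mul (K.p i)
    simp only [Complex.ofRealCLM_apply, Complex.ofReal_one, mul_one] at this
    exact ((((this.add_const _).add_const _).add_const _).add_const _).add_const _
  have h2 := (h.cexp).const_mul ((K.p i - K.a) ^ k * (K.p i - K.b) ^ l)
  refine h2.congr_deriv ?_
  simp only [uu, Function.update_eq_self]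
  ring

theorem hv0 (k l : ℤ) (X : Fin 7 → ℝ) (i : Fin N) :
    HasDerivAt (fun s => vv K k l (Function.update X 0 s) i) (K.pb i * vv K k l X i) (X 0) := by
  have h : HasDerivAt (fun s : ℝ => K.xib i (Function.update X 0 s)) (K.pb i) (X 0) := by
    simp only [KPData.xib, Function.update_self, ne_eq, Fin.reduceEq, not_false_eq_true,
      Function.update_of_ne]
    have := (Complex.ofRealCLM.hasDerivAt (x := X 0)).const_mul (K.pb i)
    simp only [Complex.ofRealCLM_apply, Complex.ofReal_one, mul_one] at this
    exact ((((this.sub_const _).add_const _).add_const _).add_const _).add_const _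
  have h2 := (h.cexp).const_mul ((-(K.pb i + K.a)⁻¹) ^ k * (-(K.pb i + K.b)⁻¹) ^ l)
  refine h2.congr_deriv ?_
  simp only [vv, Function.update_eq_self]
  ring

theorem hu3 (k l : ℤ) (X : Fin 7 → ℝ) (i : Fin N) :
    HasDerivAt (fun s => uu K k l (Function.update X 3 s) i) (uu' K k l X i) (X 3) := by
  have h : HasDerivAt (fun s : ℝ => K.xi i (Function.update X 3 s)) (1 / (K.p i - K.a)) (X 3) := by
    simp only [KPData.xi, Function.update_self, ne_eq, Fin.reduceEq, not_false_eq_true,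
      Function.update_of_ne]
    have := (Complex.ofRealCLM.hasDerivAt (x := X 3)).div_const (K.p i - K.a)
    simp only [Complex.ofRealCLM_apply, Complex.ofReal_one] at this
    exact ((this.const_add _).add_const _).add_const _
  have h2 := (h.cexp).const_mul ((K.p i - K.a) ^ k * (K.p i - K.b) ^ l)
  refine h2.congr_deriv ?_
  simp only [uu', uu, Function.update_eq_self]
  ring

theorem hv3 (k l : ℤ) (X : Fin 7 → ℝ) (i : Fin N) :
    HasDerivAt (fun s => vv K k l (Function.update X 3 s) i) (vv' K k l X i) (X 3) := by
  have h : HasDerivAt (fun s : ℝ => K.xib i (Function.update X 3 s))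
      (1 / (K.pb i + K.a)) (X 3) := by
    simp only [KPData.xib, Function.update_self, ne_eq, Fin.reduceEq, not_false_eq_true,
      Function.update_of_ne]
    have := (Complex.ofRealCLM.hasDerivAt (x := X 3)).div_const (K.pb i + K.a)
    simp only [Complex.ofRealCLM_apply, Complex.ofReal_one] at this
    exact ((this.const_add _).add_const _).add_const _
  have h2 := (h.cexp).const_mul ((-(K.pb i + K.a)⁻¹) ^ k * (-(K.pb i + K.b)⁻¹) ^ l)
  refine h2.congr_deriv ?_
  simp only [vv', vv, Function.update_eq_self]
  ring

theorem hm0 (hnd : K.Nondeg) (k l : ℤ) (X : Fin 7 → ℝ) (i j : Fin N) :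
    HasDerivAt (fun s => MM K k l (Function.update X 0 s) i j)
      (vecMulVec (uu K k l X) (vv K k l X) i j) (X 0) := by
  obtain ⟨-, -, -, -, hp, -, -⟩ := hnd
  simp only [MM, Matrix.of_apply, ment_eq, KPData.eta, KPData.etab, KPData.chi, KPData.chib,
    ne_eq, Fin.reduceEq, not_false_eq_true, Function.update_of_ne]
  refine HasDerivAt.add_const _ (HasDerivAt.add_const _ ?_)
  refine (((hu0 K k l X i).mul (hv0 K k l X j)).div_const (K.p i + K.pb j)).congr_deriv ?_
  have := hp i j
  simp only [vecMulVec_apply, Function.update_eq_self]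
  field_simp

theorem hm3 (hnd : K.Nondeg) (k l : ℤ) (X : Fin 7 → ℝ) (i j : Fin N) :
    HasDerivAt (fun s => MM K k l (Function.update X 3 s) i j)
      (vecMulVec (uu' K k l X) (vv' K k l X) i j) (X 3) := by
  obtain ⟨-, -, ha, hb, hp, -, -⟩ := hnd
  simp only [MM, Matrix.of_apply, ment_eq, KPData.eta, KPData.etab, KPData.chi, KPData.chib,
    ne_eq, Fin.reduceEq, not_false_eq_true, Function.update_of_ne]
  refine HasDerivAt.add_const _ (HasDerivAt.add_const _ ?_)
  refine (((hu3 K k l X i).mul (hv3 K k l X j)).div_const (K.p i + K.pb j)).congr_deriv ?_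
  have h1 := hp i j
  have h2 := sub_ne_zero.2 (ha i).1
  have h3 : K.pb j + K.a ≠ 0 := fun h => (hb j).1 (eq_neg_of_add_eq_zero_left h)
  simp only [vecMulVec_apply, Function.update_eq_self, uu', vv']
  field_simp
  ring

theorem hM_succ (hnd : K.Nondeg) (k l : ℤ) (X : Fin 7 → ℝ) :
    MM K (k + 1) l X = MM K k l X + vecMulVec (-uu K k l X) (vv' K k l X) := by
  obtain ⟨-, -, ha, hb, hp, -, -⟩ := hnd
  ext i j
  have h1 := hp i j
  have h2 := sub_ne_zero.2 (ha i).1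
  have h3 : K.pb j + K.a ≠ 0 := fun h => (hb j).1 (eq_neg_of_add_eq_zero_left h)
  have e1 : uu K (k + 1) l X i = uu K k l X i * (K.p i - K.a) := by
    simp only [uu, zpow_add_one₀ h2]; ring
  have e2 : vv K (k + 1) l X j = vv K k l X j * (-(K.pb j + K.a)⁻¹) := by
    simp only [vv, zpow_add_one₀ (neg_ne_zero.2 (inv_ne_zero h3))]; ring
  simp only [MM, Matrix.of_apply, Matrix.add_apply, ment_eq, vecMulVec_apply, e1, e2, vv',
    Pi.neg_apply]
  have : uu K k l X i * (K.p i - K.a) * (vv K k l X j * (-(K.pb j + K.a)⁻¹)) / (K.p i + K.pb j)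
      = uu K k l X i * vv K k l X j / (K.p i + K.pb j)
        + -uu K k l X i * (vv K k l X j / (K.pb j + K.a)) := by
    field_simp
    ring
  rw [this]
  ring

theorem hM_pred (hnd : K.Nondeg) (k l : ℤ) (X : Fin 7 → ℝ) :
    MM K (k - 1) l X = MM K k l X + vecMulVec (-uu' K k l X) (vv K k l X) := by
  obtain ⟨-, -, ha, hb, hp, -, -⟩ := hnd
  ext i j
  have h1 := hp i j
  have h2 := sub_ne_zero.2 (ha i).1
  have h3 : K.pb j + K.a ≠ 0 := fun h => (hb j).1 (eq_neg_of_add_eq_zero_left h)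
  have e1 : uu K (k - 1) l X i = uu K k l X i * (K.p i - K.a)⁻¹ := by
    simp only [uu, zpow_sub_one₀ h2]; ring
  have e2 : vv K (k - 1) l X j = vv K k l X j * (-(K.pb j + K.a)) := by
    simp only [vv, zpow_sub_one₀ (neg_ne_zero.2 (inv_ne_zero h3)), inv_neg, inv_inv]; ring
  simp only [MM, Matrix.of_apply, Matrix.add_apply, ment_eq, vecMulVec_apply, e1, e2, uu',
    Pi.neg_apply]
  have : uu K k l X i * (K.p i - K.a)⁻¹ * (vv K k l X j * (-(K.pb j + K.a))) / (K.p i + K.pb j)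
      = uu K k l X i * vv K k l X j / (K.p i + K.pb j)
        + -(uu K k l X i / (K.p i - K.a)) * vv K k l X j := by
    field_simp
    ring
  rw [this]
  ring

theorem pd0_tau (hnd : K.Nondeg) (k l : ℤ) : pd 0 (K.tau0 k l) = fun X =>
    (MM K k l X + vecMulVec (uu K k l X) (vv K k l X)).det - (MM K k l X).det := by
  funext X
  have h := (hasDerivAt_det _ _ _ (hm0 K hnd k l X)).deriv
  simp only [Function.update_eq_self, trace_adj] at h
  rw [det_rank_one, add_sub_cancel_left, ← h]
  rfl

theorem hd3_tau (hnd : K.Nondeg) (k l : ℤ) (X : Fin 7 → ℝ) :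
    HasDerivAt (fun s => (MM K k l (Function.update X 3 s)).det)
      (bil (MM K k l X) (uu' K k l X) (vv' K k l X)) (X 3) := by
  have h := hasDerivAt_det _ _ _ (hm3 K hnd k l X)
  simpa only [Function.update_eq_self, trace_adj] using h

theorem pd3_tau (hnd : K.Nondeg) (k l : ℤ) (X : Fin 7 → ℝ) : pd 3 (K.tau0 k l) X =
    bil (MM K k l X) (uu' K k l X) (vv' K k l X) :=
  (hd3_tau K hnd k l X).deriv

theorem pd30_tau (hnd : K.Nondeg) (k l : ℤ) (X : Fin 7 → ℝ) : pd 3 (pd 0 (K.tau0 k l)) X =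
    (MM K k l X + vecMulVec (uu K k l X) (vv K k l X) + vecMulVec (uu' K k l X) (vv' K k l X)).det
    - (MM K k l X + vecMulVec (uu K k l X) (vv K k l X)).det
    + bil (MM K k l X) (uu' K k l X) (vv K k l X)
    + bil (MM K k l X) (uu K k l X) (vv' K k l X)
    - bil (MM K k l X) (uu' K k l X) (vv' K k l X) := by
  rw [pd0_tau K hnd]
  have h := hasDerivAt_det
    (fun s => MM K k l (Function.update X 3 s) +
      vecMulVec (uu K k l (Function.update X 3 s)) (vv K k l (Function.update X 3 s)))
    (vecMulVec (uu' K k l X) (vv' K k l X) +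
      (vecMulVec (uu' K k l X) (vv K k l X) + vecMulVec (uu K k l X) (vv' K k l X))) (X 3) (by
      intro i j
      have h2 := (hm3 K hnd k l X i j).add ((hu3 K k l X i).mul (hv3 K k l X j))
      simp only [Function.update_eq_self] at h2
      exact h2)
  have h3 := (h.sub (hd3_tau K hnd k l X)).deriv
  simp only [Function.update_eq_self, Matrix.mul_add, Matrix.trace_add, trace_adj, bil_shift,
    bil_shift'] at h3
  rw [det_rank_one (_ + _)]
  refine Eq.trans h3 ?_
  ring

end TodaAux

theorem stmt17 {N : ℕ} (hN : 1 ≤ N) (K : KPData N) (hnd : K.Nondeg) :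
    ∀ (k l : ℤ) (X : Fin 7 → ℝ),
      2 * (pd 3 (pd 0 (K.tau0 k l)) X * K.tau0 k l X
            - pd 3 (K.tau0 k l) X * pd 0 (K.tau0 k l) X)
        - 2 * (K.tau0 k l X) ^ 2
        = -2 * (K.tau0 (k + 1) l X * K.tau0 (k - 1) l X) := by
  intro k l X
  have h1 : K.tau0 (k + 1) l X = _ := congrArg Matrix.det (TodaAux.hM_succ K hnd k l X)
  have h2 : K.tau0 (k - 1) l X = _ := congrArg Matrix.det (TodaAux.hM_pred K hnd k l X)
  have h0 : K.tau0 k l X = (TodaAux.MM K k l X).det := rfl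
  have h3 := TodaAux.det_rank_two (TodaAux.MM K k l X) (TodaAux.uu K k l X) (TodaAux.vv K k l X)
    (TodaAux.uu' K k l X) (TodaAux.vv' K k l X)
  rw [h1, h2, h0, TodaAux.pd30_tau K hnd, TodaAux.pd3_tau K hnd, TodaAux.pd0_tau K hnd]
  simp only [TodaAux.det_rank_one (TodaAux.MM K k l X), TodaAux.bil_neg_left]
  linear_combination 2 * h3


end
end

section
/- In the KP tau-function setting, for all integers k, l and at every point of ℝ⁷, the tau function τ⁽⁰⁾ satisfies the bilinear identity (D_{x₁}² − D_{x₂} + 2aD_{x₁})τ_{k+1,l}⁽⁰⁾·τ_{k,l}⁽⁰⁾ = 0; written out, ∂_{x₁}²τ_{k+1,l}⁽⁰⁾·τ_{k,l}⁽⁰⁾ − 2∂_{x₁}τ_{k+1,l}⁽⁰⁾·∂_{x₁}τ_{k,l}⁽⁰⁾ + τ_{k+1,l}⁽⁰⁾·∂_{x₁}²τ_{k,l}⁽⁰⁾ − (∂_{x₂}τ_{k+1,l}⁽⁰⁾·τ_{k,l}⁽⁰⁾ − τ_{k+1,l}⁽⁰⁾·∂_{x₂}τ_{k,l}⁽⁰⁾)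 + 2a(∂_{x₁}τ_{k+1,l}⁽⁰⁾·τ_{k,l}⁽⁰⁾ − τ_{k+1,l}⁽⁰⁾·∂_{x₁}τ_{k,l}⁽⁰⁾) = 0. -/
open Complex Matrix

noncomputable section

open Filter Topology in
theorem aux_dense {N : ℕ} (f g : Matrix (Fin N) (Fin N) ℂ → ℂ) (hf : Continuous f)
    (hg : Continuous g) (h : ∀ M, M.det ≠ 0 → f M = g M) (M) : f M = g M := by
  have hp : ((-M).charpoly) ≠ 0 := (Matrix.charpoly_monic _).ne_zero
  have hev : ∀ᶠ t : ℂ in 𝓝[≠] 0, (M + Matrix.scalar (Fin N) t).det ≠ 0 := by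
    have hfin : {t : ℂ | (-M).charpoly.IsRoot t}.Finite := Polynomial.finite_setOfPred_isRoot hp
    have : ∀ᶠ t : ℂ in 𝓝[≠] 0, t ∉ {t : ℂ | (-M).charpoly.IsRoot t} := by
      have h1 : ({t : ℂ | (-M).charpoly.IsRoot t} \ {0})ᶜ ∈ 𝓝 (0:ℂ) :=
        (hfin.subset Set.sdiff_subset).isClosed.isOpen_compl.mem_nhds (by simp)
      filter_upwards [mem_nhdsWithin_of_mem_nhds h1, self_mem_nhdsWithin] with t ht ht0 hh
      exact ht ⟨hh, ht0⟩
    filter_upwards [this] with t ht h0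
    apply ht
    show (-M).charpoly.eval t = 0
    rw [Matrix.eval_charpoly, sub_neg_eq_add, add_comm, h0]
  have hc : Continuous fun t : ℂ => M + Matrix.scalar (Fin N) t := by
    apply continuous_const.add
    show Continuous fun t : ℂ => (Matrix.diagonal fun _ : Fin N => t)
    fun_prop
  have e0 : M + Matrix.scalar (Fin N) (0:ℂ) = M := by simp
  have t1 : Tendsto (fun t : ℂ => f (M + Matrix.scalar (Fin N) t)) (𝓝[≠] 0) (𝓝 (f M)) := by
    have := (hf.comp hc).tendsto 0
    simp only [Function.comp, e0] at this
    exact this.mono_left nhdsWithin_le_nhds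
  have t2 : Tendsto (fun t : ℂ => g (M + Matrix.scalar (Fin N) t)) (𝓝[≠] 0) (𝓝 (g M)) := by
    have := (hg.comp hc).tendsto 0
    simp only [Function.comp, e0] at this
    exact this.mono_left nhdsWithin_le_nhds
  refine tendsto_nhds_unique t1 (t2.congr' ?_)
  filter_upwards [hev] with t ht
  exact (h _ ht).symm

/-- Bilinear pairing with the adjugate. -/
def adjB {N : ℕ} (M : Matrix (Fin N) (Fin N) ℂ) (x y : Fin N → ℂ) : ℂ :=
  y ⬝ᵥ (M.adjugate *ᵥ x)

theorem adjB_cont {N : ℕ} (x y : Fin N → ℂ) : Continuous fun M => adjB M x y := by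
  unfold adjB
  fun_prop

theorem adjB_add_left {N : ℕ} (M : Matrix (Fin N) (Fin N) ℂ) (x x' y : Fin N → ℂ) :
    adjB M (x + x') y = adjB M x y + adjB M x' y := by
  simp [adjB, mulVec_add, dotProduct_add]
theorem adjB_add_right {N : ℕ} (M : Matrix (Fin N) (Fin N) ℂ) (x y y' : Fin N → ℂ) :
    adjB M x (y + y') = adjB M x y + adjB M x y' := by
  simp [adjB, add_dotProduct]
theorem adjB_smul_left {N : ℕ} (M : Matrix (Fin N) (Fin N) ℂ) (c : ℂ) (x y : Fin N → ℂ) :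
    adjB M (c • x) y = c * adjB M x y := by
  simp [adjB, mulVec_smul, dotProduct_smul]
theorem adjB_smul_right {N : ℕ} (M : Matrix (Fin N) (Fin N) ℂ) (c : ℂ) (x y : Fin N → ℂ) :
    adjB M x (c • y) = c * adjB M x y := by
  simp [adjB, smul_dotProduct]
theorem adjB_neg_right {N : ℕ} (M : Matrix (Fin N) (Fin N) ℂ) (x y : Fin N → ℂ) :
    adjB M x (-y) = - adjB M x y := by
  simp [adjB]

theorem adjB_inv {N : ℕ} (M : Matrix (Fin N) (Fin N) ℂ) (h : M.det ≠ 0) (x y : Fin N → ℂ) :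
    adjB M x y = M.det * (y ⬝ᵥ (M⁻¹ *ᵥ x)) := by
  have : M.adjugate = M.det • M⁻¹ := by
    rw [Matrix.inv_def, smul_smul, Ring.inverse_eq_inv', mul_inv_cancel₀ h, one_smul]
  rw [adjB, this, smul_mulVec, dotProduct_smul, smul_eq_mul]

theorem det_two {N : ℕ} (M : Matrix (Fin N) (Fin N) ℂ) (a b c d : Fin N → ℂ) :
    M.det * (M + vecMulVec a b + vecMulVec c d).det =
      (M.det + adjB M a b) * (M.det + adjB M c d) - adjB M c b * adjB M a d := by
  revert M
  apply aux_dense (f := fun M => M.det * (M + vecMulVec a b + vecMulVec c d).det)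
    (g := fun M => (M.det + adjB M a b) * (M.det + adjB M c d) - adjB M c b * adjB M a d)
  · fun_prop
  · have := adjB_cont a b; have := adjB_cont c d; have := adjB_cont c b; have := adjB_cont a d
    fun_prop
  intro M hM
  have hu : IsUnit M.det := isUnit_iff_ne_zero.2 hM
  have e : M + vecMulVec a b + vecMulVec c d =
      M * (1 + (M⁻¹ * (Matrix.of ![a, c])ᵀ) * (Matrix.of ![b, d])) := by
    rw [Matrix.mul_add, Matrix.mul_one, ← Matrix.mul_assoc, ← Matrix.mul_assoc,
      Matrix.mul_nonsing_inv _ hu, Matrix.one_mul, add_assoc]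
    congr 1
    ext i j
    simp [Matrix.mul_apply, vecMulVec_apply]
  have key : (M + vecMulVec a b + vecMulVec c d).det = M.det *
      ((1 + b ⬝ᵥ (M⁻¹ *ᵥ a)) * (1 + d ⬝ᵥ (M⁻¹ *ᵥ c))
        - (b ⬝ᵥ (M⁻¹ *ᵥ c)) * (d ⬝ᵥ (M⁻¹ *ᵥ a))) := by
    rw [e, det_mul, det_one_add_mul_comm, det_fin_two]
    simp [vecMul, Matrix.mul_apply, dotProduct, mulVec]
  simp only [adjB_inv M hM, key]
  ring

theorem det_one {N : ℕ} (M : Matrix (Fin N) (Fin N) ℂ) (a b : Fin N → ℂ) :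
    (M + vecMulVec a b).det = M.det + adjB M a b := by
  revert M
  apply aux_dense (f := fun M => (M + vecMulVec a b).det) (g := fun M => M.det + adjB M a b)
  · fun_prop
  · have := adjB_cont a b
    fun_prop
  intro M hM
  have := det_two M a b 0 0
  have h0 : adjB M 0 0 = 0 := by simp [adjB]
  have h1 : adjB M 0 b = 0 := by simp [adjB]
  rw [h0, h1] at this
  simp only [vecMulVec_zero, add_zero, zero_mul, sub_zero] at this
  apply mul_left_cancel₀ hM
  simp only [this]; ring

theorem adjB_shift_left {N : ℕ} (M : Matrix (Fin N) (Fin N) ℂ) (u v y : Fin N → ℂ) :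
    adjB (M + vecMulVec u v) u y = adjB M u y := by
  have h1 := det_one (M + vecMulVec u v) u y
  rw [add_assoc, ← vecMulVec_add, det_one, det_one, adjB_add_right] at h1
  linear_combination -h1

theorem adjB_shift_right {N : ℕ} (M : Matrix (Fin N) (Fin N) ℂ) (u v x : Fin N → ℂ) :
    adjB (M + vecMulVec u v) x v = adjB M x v := by
  have h1 := det_one (M + vecMulVec u v) x v
  rw [add_assoc, ← add_vecMulVec, det_one, det_one, adjB_add_left] at h1
  linear_combination -h1

theorem adjB_key {N : ℕ} (M : Matrix (Fin N) (Fin N) ℂ) (u u1 v w : Fin N → ℂ) :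
    M.det * adjB (M + vecMulVec u w) u1 v =
      (M + vecMulVec u w).det * adjB M u1 v - adjB M u1 w * adjB M u v := by
  have h1 := det_two M u w u1 v
  rw [det_one (M + vecMulVec u w), det_one] at h1
  rw [det_one]
  linear_combination h1

theorem hasDerivAt_det {N : ℕ} (M : ℝ → Matrix (Fin N) (Fin N) ℂ) (M' : Matrix (Fin N) (Fin N) ℂ)
    (s : ℝ) (h : ∀ i j, HasDerivAt (fun t => M t i j) (M' i j) s) :
    HasDerivAt (fun t => (M t).det) ((M s).adjugate * M').trace s := by
  have hd : HasDerivAt (fun t => (M t).det)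
      (∑ σ : Equiv.Perm (Fin N), ((Equiv.Perm.sign σ : ℤ) : ℂ) *
        ∑ i, (∏ j ∈ Finset.univ.erase i, M s (σ j) j) • M' (σ i) i) s := by
    simp only [det_apply']
    apply HasDerivAt.fun_sum
    intro σ _
    apply HasDerivAt.const_mul
    exact HasDerivAt.fun_finsetProd (fun i _ => h (σ i) i)
  convert hd using 1
  have : ((M s).adjugate * M').trace = ∑ i, ((M s).updateCol i (fun r => M' r i)).det := by
    simp only [trace, diag]
    refine Finset.sum_congr rfl fun i _ => ?_
    rw [← cramer_apply, cramer_eq_adjugate_mulVec]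
    rfl
  rw [this]
  simp only [det_apply', Finset.mul_sum]
  rw [Finset.sum_comm]
  refine Finset.sum_congr rfl fun σ _ => Finset.sum_congr rfl fun i _ => ?_
  rw [← Finset.mul_prod_erase _ _ (Finset.mem_univ i)]
  congr 1
  rw [updateCol_self, smul_eq_mul, mul_comm]
  congr 1
  refine Finset.prod_congr rfl fun j hj => ?_
  rw [updateCol_ne (Finset.ne_of_mem_erase hj)]

theorem trace_adjB {N : ℕ} (M : Matrix (Fin N) (Fin N) ℂ) (x y : Fin N → ℂ) :
    (M.adjugate * vecMulVec x y).trace = adjB M x y := by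
  rw [mul_vecMulVec, trace_vecMulVec, adjB, dotProduct_comm]

namespace KPData

variable {N : ℕ} (K : KPData N)

/-- Left exponential factor. -/
def ku (k l : ℤ) (X : Fin 7 → ℝ) (i : Fin N) : ℂ :=
  (K.p i - K.a) ^ k * (K.p i - K.b) ^ l * Complex.exp (K.xi i X)

/-- Right exponential factor. -/
def kv (k l : ℤ) (X : Fin 7 → ℝ) (j : Fin N) : ℂ :=
  ((-(K.pb j + K.a)) ^ k)⁻¹ * ((-(K.pb j + K.b)) ^ l)⁻¹ * Complex.exp (K.xib j X)

/-- The tau matrix. -/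
def kM (k l : ℤ) (X : Fin 7 → ℝ) : Matrix (Fin N) (Fin N) ℂ :=
  Matrix.of fun i j => K.ment k l i j X

/-- The part of the entries independent of the `x` variables. -/
def kR (i j : Fin N) (X : Fin 7 → ℝ) : ℂ :=
    K.Ct i * K.Cb j * Complex.exp (K.eta i X + K.etab j X) / (K.q i + K.qb j)
    + K.Dt i * K.Db j * Complex.exp (K.chi i X + K.chib j X) / (K.r i + K.rb j)

theorem ment_eq (k l : ℤ) (i j : Fin N) (X : Fin 7 → ℝ) :
    K.ment k l i j X = (1 / (K.p i + K.pb j)) * (K.ku k l X i * K.kv k l X j) + K.kR i j X := by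
  unfold ment ku kv kR
  rw [← div_neg, ← div_neg, div_zpow, div_zpow, Complex.exp_add (K.xi i X)]
  ring

theorem ku_pd0 (k l : ℤ) (i : Fin N) (X : Fin 7 → ℝ) :
    HasDerivAt (fun s => K.ku k l (Function.update X 0 s) i) (K.p i * K.ku k l X i) (X 0) := by
  have h : HasDerivAt (fun s : ℝ => K.xi i (Function.update X 0 s)) (K.p i) (X 0) := by
    have h1 := ((Complex.ofRealCLM.hasDerivAt (x := X 0)).const_mul (K.p i)).add_const
      (K.xi i X - K.p i * (X 0 : ℂ))
    simp only [Complex.ofRealCLM_apply, Complex.ofReal_one, mul_one] at h1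
    refine h1.congr_of_eventuallyEq (Filter.Eventually.of_forall fun s => ?_)
    simp [xi, Function.update]
    ring
  have h2 := h.cexp.const_mul ((K.p i - K.a) ^ k * (K.p i - K.b) ^ l)
  simp only [Function.update_eq_self] at h2
  refine HasDerivAt.congr_deriv h2 ?_
  unfold ku
  ring

theorem ku_pd1 (k l : ℤ) (i : Fin N) (X : Fin 7 → ℝ) :
    HasDerivAt (fun s => K.ku k l (Function.update X 1 s) i) (K.p i ^ 2 * K.ku k l X i) (X 1) := by
  have h : HasDerivAt (fun s : ℝ => K.xi i (Function.update X 1 s)) (K.p i ^ 2) (X 1) := by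
    have h1 := ((Complex.ofRealCLM.hasDerivAt (x := X 1)).const_mul (K.p i ^ 2)).add_const
      (K.xi i X - K.p i ^ 2 * (X 1 : ℂ))
    simp only [Complex.ofRealCLM_apply, Complex.ofReal_one, mul_one] at h1
    refine h1.congr_of_eventuallyEq (Filter.Eventually.of_forall fun s => ?_)
    simp [xi, Function.update]
    ring
  have h2 := h.cexp.const_mul ((K.p i - K.a) ^ k * (K.p i - K.b) ^ l)
  simp only [Function.update_eq_self] at h2
  refine HasDerivAt.congr_deriv h2 ?_
  unfold ku
  ring

theorem kv_pd0 (k l : ℤ) (i : Fin N) (X : Fin 7 → ℝ) :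
    HasDerivAt (fun s => K.kv k l (Function.update X 0 s) i) (K.pb i * K.kv k l X i) (X 0) := by
  have h : HasDerivAt (fun s : ℝ => K.xib i (Function.update X 0 s)) (K.pb i) (X 0) := by
    have h1 := ((Complex.ofRealCLM.hasDerivAt (x := X 0)).const_mul (K.pb i)).add_const
      (K.xib i X - K.pb i * (X 0 : ℂ))
    simp only [Complex.ofRealCLM_apply, Complex.ofReal_one, mul_one] at h1
    refine h1.congr_of_eventuallyEq (Filter.Eventually.of_forall fun s => ?_)
    simp [xib, Function.update]
    ring
  have h2 := h.cexp.const_mul (((-(K.pb i + K.a)) ^ k)⁻¹ * ((-(K.pb i + K.b)) ^ l)⁻¹)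
  simp only [Function.update_eq_self] at h2
  refine HasDerivAt.congr_deriv h2 ?_
  unfold kv
  ring

theorem kv_pd1 (k l : ℤ) (i : Fin N) (X : Fin 7 → ℝ) :
    HasDerivAt (fun s => K.kv k l (Function.update X 1 s) i)
      (-K.pb i ^ 2 * K.kv k l X i) (X 1) := by
  have h : HasDerivAt (fun s : ℝ => K.xib i (Function.update X 1 s)) (-K.pb i ^ 2) (X 1) := by
    have h1 := ((Complex.ofRealCLM.hasDerivAt (x := X 1)).const_mul (-K.pb i ^ 2)).add_const
      (K.xib i X - -K.pb i ^ 2 * (X 1 : ℂ))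
    simp only [Complex.ofRealCLM_apply, Complex.ofReal_one, mul_one] at h1
    refine h1.congr_of_eventuallyEq (Filter.Eventually.of_forall fun s => ?_)
    simp [xib, Function.update]
    ring
  have h2 := h.cexp.const_mul (((-(K.pb i + K.a)) ^ k)⁻¹ * ((-(K.pb i + K.b)) ^ l)⁻¹)
  simp only [Function.update_eq_self] at h2
  refine HasDerivAt.congr_deriv h2 ?_
  unfold kv
  ring

theorem kR_upd0 (i j : Fin N) (X : Fin 7 → ℝ) (s : ℝ) :
    K.kR i j (Function.update X 0 s) = K.kR i j X := by
  simp [kR, eta, etab, chi, chib, Function.update]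

theorem kR_upd1 (i j : Fin N) (X : Fin 7 → ℝ) (s : ℝ) :
    K.kR i j (Function.update X 1 s) = K.kR i j X := by
  simp [kR, eta, etab, chi, chib, Function.update]

theorem kM_pd0 (hp : ∀ i j, K.p i + K.pb j ≠ 0) (k l : ℤ) (i j : Fin N) (X : Fin 7 → ℝ) :
    HasDerivAt (fun s => K.kM k l (Function.update X 0 s) i j)
      (vecMulVec (K.ku k l X) (K.kv k l X) i j) (X 0) := by
  have h := (((K.ku_pd0 k l i X).mul (K.kv_pd0 k l j X)).const_mul
    (1 / (K.p i + K.pb j))).add_const (K.kR i j X)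
  simp only [Function.update_eq_self] at h
  have e : (fun s => K.kM k l (Function.update X 0 s) i j) = fun s =>
      (1 / (K.p i + K.pb j)) * (K.ku k l (Function.update X 0 s) i *
        K.kv k l (Function.update X 0 s) j) + K.kR i j X := by
    funext s
    rw [← K.kR_upd0 i j X s, ← ment_eq]
    rfl
  rw [e]
  refine HasDerivAt.congr_deriv h ?_
  have := hp i j
  rw [vecMulVec_apply]
  field_simp

theorem kM_pd1 (hp : ∀ i j, K.p i + K.pb j ≠ 0) (k l : ℤ) (i j : Fin N) (X : Fin 7 → ℝ) :
    HasDerivAt (fun s => K.kM k l (Function.update X 1 s) i j)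
      ((vecMulVec (K.p * K.ku k l X) (K.kv k l X) +
        vecMulVec (K.ku k l X) (-(K.pb * K.kv k l X))) i j) (X 1) := by
  have h := (((K.ku_pd1 k l i X).mul (K.kv_pd1 k l j X)).const_mul
    (1 / (K.p i + K.pb j))).add_const (K.kR i j X)
  simp only [Function.update_eq_self] at h
  have e : (fun s => K.kM k l (Function.update X 1 s) i j) = fun s =>
      (1 / (K.p i + K.pb j)) * (K.ku k l (Function.update X 1 s) i *
        K.kv k l (Function.update X 1 s) j) + K.kR i j X := by
    funext s
    rw [← K.kR_upd1 i j X s, ← ment_eq]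
    rfl
  rw [e]
  refine HasDerivAt.congr_deriv h ?_
  have := hp i j
  simp only [Matrix.add_apply, vecMulVec_apply, Pi.mul_apply, Pi.neg_apply]
  field_simp
  ring

theorem tau_pd0 (hp : ∀ i j, K.p i + K.pb j ≠ 0) (k l : ℤ) :
    pd 0 (K.tau0 k l) = fun X => adjB (K.kM k l X) (K.ku k l X) (K.kv k l X) := by
  funext X
  have h := hasDerivAt_det (fun s => K.kM k l (Function.update X 0 s)) _ _
    (fun i j => K.kM_pd0 hp k l i j X)
  rw [trace_adjB, Function.update_eq_self] at h
  exact h.deriv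

theorem tau_pd1 (hp : ∀ i j, K.p i + K.pb j ≠ 0) (k l : ℤ) (X : Fin 7 → ℝ) :
    pd 1 (K.tau0 k l) X = adjB (K.kM k l X) (K.p * K.ku k l X) (K.kv k l X)
      - adjB (K.kM k l X) (K.ku k l X) (K.pb * K.kv k l X) := by
  have h := hasDerivAt_det (fun s => K.kM k l (Function.update X 1 s)) _ _
    (fun i j => K.kM_pd1 hp k l i j X)
  rw [Matrix.mul_add, Matrix.trace_add, trace_adjB, trace_adjB, Function.update_eq_self,
    adjB_neg_right, ← sub_eq_add_neg] at h
  exact h.deriv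

theorem tau_pd00 (hp : ∀ i j, K.p i + K.pb j ≠ 0) (k l : ℤ) (X : Fin 7 → ℝ) :
    pd 0 (pd 0 (K.tau0 k l)) X = adjB (K.kM k l X) (K.p * K.ku k l X) (K.kv k l X)
      + adjB (K.kM k l X) (K.ku k l X) (K.pb * K.kv k l X) := by
  have e : pd 0 (K.tau0 k l) = fun X =>
      (K.kM k l X + vecMulVec (K.ku k l X) (K.kv k l X)).det - (K.kM k l X).det := by
    rw [tau_pd0 K hp]
    funext X
    rw [det_one]
    ring
  rw [e]
  have h1 := hasDerivAt_det (fun s => K.kM k l (Function.update X 0 s)) _ _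
    (fun i j => K.kM_pd0 hp k l i j X)
  have h2 := hasDerivAt_det (fun s => K.kM k l (Function.update X 0 s) +
      vecMulVec (K.ku k l (Function.update X 0 s)) (K.kv k l (Function.update X 0 s)))
      (vecMulVec (K.ku k l X) (K.kv k l X) + (vecMulVec (K.p * K.ku k l X) (K.kv k l X) +
        vecMulVec (K.ku k l X) (K.pb * K.kv k l X))) (X 0) (by
      intro i j
      have h := (K.kM_pd0 hp k l i j X).add ((K.ku_pd0 k l i X).mul (K.kv_pd0 k l j X))
      simp only [Function.update_eq_self] at h
      exact HasDerivAt.congr_deriv h rfl)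
  have h3 := (h2.sub h1).deriv
  simp only [Matrix.mul_add, Matrix.trace_add, trace_adjB, Function.update_eq_self,
    adjB_shift_left, adjB_shift_right] at h3
  refine Eq.trans h3 ?_
  ring

end KPData

theorem stmt19 {N : ℕ} (hN : 1 ≤ N) (K : KPData N) (hnd : K.Nondeg) :
    ∀ (k l : ℤ) (X : Fin 7 → ℝ),
      pd 0 (pd 0 (K.tau0 (k + 1) l)) X * K.tau0 k l X
          - 2 * pd 0 (K.tau0 (k + 1) l) X * pd 0 (K.tau0 k l) X
          + K.tau0 (k + 1) l X * pd 0 (pd 0 (K.tau0 k l)) X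
          - (pd 1 (K.tau0 (k + 1) l) X * K.tau0 k l X
              - K.tau0 (k + 1) l X * pd 1 (K.tau0 k l) X)
          + 2 * K.a * (pd 0 (K.tau0 (k + 1) l) X * K.tau0 k l X
              - K.tau0 (k + 1) l X * pd 0 (K.tau0 k l) X)
        = 0 := by
  intro k l X
  obtain ⟨ha, hb, hpa, hpb, hp, -, -⟩ := hnd
  have hu : K.ku (k + 1) l X = K.p * K.ku k l X + (-K.a) • K.ku k l X := by
    funext i
    have := sub_ne_zero.2 (hpa i).1
    simp only [KPData.ku, Pi.add_apply, Pi.mul_apply, Pi.smul_apply, smul_eq_mul,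
      zpow_add_one₀ this]
    ring
  have hv : K.kv k l X = -(K.pb * K.kv (k + 1) l X) + (-K.a) • K.kv (k + 1) l X := by
    funext j
    have h0 : -(K.pb j + K.a) ≠ 0 := by
      intro h
      exact (hpb j).1 (by linear_combination -h)
    have h1 := zpow_ne_zero k h0
    simp only [KPData.kv, Pi.add_apply, Pi.neg_apply, Pi.mul_apply, Pi.smul_apply, smul_eq_mul,
      zpow_add_one₀ h0, mul_inv]
    have h2 : (-(K.pb j + K.a)) * (-(K.pb j + K.a))⁻¹ = 1 := mul_inv_cancel₀ h0
    linear_combination (-(((-(K.pb j + K.a)) ^ k)⁻¹ * ((-(K.pb j + K.b)) ^ l)⁻¹ *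
      Complex.exp (K.xib j X))) * h2
  have hM : K.kM (k + 1) l X = K.kM k l X + vecMulVec (K.ku k l X) (K.kv (k + 1) l X) := by
    ext i j
    have hui := congrFun hu i
    have hvj := congrFun hv j
    simp only [Pi.add_apply, Pi.neg_apply, Pi.mul_apply, Pi.smul_apply, smul_eq_mul] at hui hvj
    simp only [Matrix.add_apply, KPData.kM, Matrix.of_apply, KPData.ment_eq, vecMulVec_apply,
      hui, hvj]
    have := hp i j
    field_simp
    ring
  have key := adjB_key (K.kM k l X) (K.ku k l X) (K.ku (k + 1) l X) (K.kv k l X)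
    (K.kv (k + 1) l X)
  have hs := adjB_shift_right (K.kM k l X) (K.ku k l X) (K.kv (k + 1) l X) (K.ku (k + 1) l X)
  rw [← hM] at key hs
  have e1 : adjB (K.kM k l X) (K.ku (k + 1) l X) (K.kv k l X) =
      adjB (K.kM k l X) (K.p * K.ku k l X) (K.kv k l X)
        - K.a * adjB (K.kM k l X) (K.ku k l X) (K.kv k l X) := by
    rw [hu, adjB_add_left, adjB_smul_left]
    ring
  have e2 : adjB (K.kM (k + 1) l X) (K.ku (k + 1) l X) (K.kv k l X) =
      - adjB (K.kM (k + 1) l X) (K.ku (k + 1) l X) (K.pb * K.kv (k + 1) l X)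
        - K.a * adjB (K.kM (k + 1) l X) (K.ku (k + 1) l X) (K.kv (k + 1) l X) := by
    conv_lhs => rw [hv, adjB_add_right, adjB_smul_right, adjB_neg_right]
    ring
  rw [e1, e2, ← hs] at key
  rw [K.tau_pd00 hp, K.tau_pd00 hp, K.tau_pd1 hp, K.tau_pd1 hp, K.tau_pd0 hp, K.tau_pd0 hp]
  have t1 : K.tau0 k l X = (K.kM k l X).det := rfl
  have t2 : K.tau0 (k + 1) l X = (K.kM (k + 1) l X).det := rfl
  rw [t1, t2]
  linear_combination (-2) * key

end
end
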